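/- arXiv:2601.20841 — 2 statements merged into one kernel-verified Lean document; each statement's English description precedes it below -/
import Mathlib

section
/- Let η > 0, U ∈ ℝ, and C_Q ∈ ℝ. Let h(x) = h_k + m·(x − x_k) be affine with slope m ≠ 0 and h(x) > 0 on the interval [x_k, x_{k+1}]. If p : ℝ → ℝ is differentiable on [x_k, x_{k+1}] and satisfies h(x)³·p'(x) = C_Q + 6·η·U·h(x) for all x ∈ [x_k, x_{k+1}], then there exists a constant C_P such that p(x) = −(1/m)·( C_Q/(2·h(x)²) + 6·η·U/h(x) ) + C_P for all x ∈ [x_k, x_{k+1}]. -/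
/-!
Regarded as a function of the height `t`, `C_Q/(2t²) + 6ηU/t` has derivative `-(C_Q + 6ηU·t)/t³`.
Along a height of constant slope `m` the chain rule contributes a factor `m`, which `-1/m` cancels,
so the closed form solves the same equation as `p` and differs from it by a constant.
-/

section Antiderivative

variable {𝕜 : Type*} [NontriviallyNormedField 𝕜]

theorem hasDerivWithinAt_of_eqOn_affine {h : 𝕜 → 𝕜} {h₀ m x₀ x : 𝕜} {s : Set 𝕜}
    (hh : ∀ y ∈ s, h y = h₀ + m * (y - x₀)) (hx : x ∈ s) : HasDerivWithinAt h m s x := by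
  have affine : HasDerivAt (fun y => h₀ + m * (y - x₀)) m x := by
    simpa only [mul_one] using (((hasDerivAt_id' x).sub_const x₀).const_mul m).const_add h₀
  exact affine.hasDerivWithinAt.congr hh (hh x hx)

theorem hasDerivAt_const_div_two_mul_sq_add_const_div [NeZero (2 : 𝕜)] (a b : 𝕜) {t : 𝕜}
    (ht : t ≠ 0) :
    HasDerivAt (fun u => a / (2 * u ^ 2) + b / u) (-((a + b * t) / t ^ 3)) t := by
  have two_ne : (2 : 𝕜) ≠ 0 := two_ne_zero
  have deriv_sq : HasDerivAt (fun u : 𝕜 => 2 * u ^ 2) (2 * (2 * t)) t := by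
    simpa using (hasDerivAt_pow 2 t).const_mul 2
  have deriv_first : HasDerivAt (fun u => a / (2 * u ^ 2)) (-(a / t ^ 3)) t :=
    ((hasDerivAt_const t a).fun_div deriv_sq (mul_ne_zero two_ne (pow_ne_zero 2 ht))).congr_deriv
      (by field_simp; ring)
  have deriv_second : HasDerivAt (fun u => b / u) (-(b / t ^ 2)) t :=
    ((hasDerivAt_const t b).fun_div (hasDerivAt_id' t) ht).congr_deriv (by ring)
  exact (deriv_first.fun_add deriv_second).congr_deriv (by field_simp; ring)

end Antiderivative

section ConvexDomain

variable {𝕜 : Type*} [RCLike 𝕜] {s : Set 𝕜}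

theorem exists_eq_add_const_of_hasDerivWithinAt_eq {E : Type*} [NormedAddCommGroup E]
    [NormedSpace 𝕜 E] {f g f' : 𝕜 → E} (hs : Convex ℝ s)
    (hf : ∀ x ∈ s, HasDerivWithinAt f (f' x) s x)
    (hg : ∀ x ∈ s, HasDerivWithinAt g (f' x) s x) :
    ∃ C, ∀ x ∈ s, f x = g x + C := by
  have deriv_sub : ∀ x ∈ s, HasDerivWithinAt (fun y => f y - g y) 0 s x := fun x hx => by
    simpa only [sub_self] using (hf x hx).fun_sub (hg x hx)
  have sub_const : ∀ x ∈ s, ∀ y ∈ s, f y - g y = f x - g x := fun x hx y hy => by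
    simpa [sub_eq_zero] using
      hs.norm_image_sub_le_of_norm_hasDerivWithin_le deriv_sub (fun _ _ => norm_zero.le) hx hy
  rcases s.eq_empty_or_nonempty with rfl | ⟨x₀, hx₀⟩
  · exact ⟨0, fun _ => False.elim⟩
  · exact ⟨f x₀ - g x₀, fun x hx => sub_eq_iff_eq_add'.mp (sub_const x₀ hx₀ x hx)⟩

theorem reynolds_pwl_solution_unique_general {η U CQ hk m xk : 𝕜} {h p p' : 𝕜 → 𝕜}
    (hs : Convex ℝ s) (hm : m ≠ 0) (hdef : ∀ x ∈ s, h x = hk + m * (x - xk))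
    (hne : ∀ x ∈ s, h x ≠ 0) (hp : ∀ x ∈ s, HasDerivWithinAt p (p' x) s x)
    (hrel : ∀ x ∈ s, h x ^ 3 * p' x = CQ + 6 * η * U * h x) :
    ∃ CP, ∀ x ∈ s, p x = -(1 / m) * (CQ / (2 * h x ^ 2) + 6 * η * U / h x) + CP := by
  refine exists_eq_add_const_of_hasDerivWithinAt_eq hs hp fun x hx => ?_
  have deriv_eq : p' x = (CQ + 6 * η * U * h x) / h x ^ 3 :=
    eq_div_of_mul_eq (pow_ne_zero 3 (hne x hx)) (by rw [mul_comm, hrel x hx])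
  have deriv_height : HasDerivWithinAt h m s x := hasDerivWithinAt_of_eqOn_affine hdef hx
  have deriv_bracket : HasDerivWithinAt (fun y => CQ / (2 * h y ^ 2) + 6 * η * U / h y)
      (-((CQ + 6 * η * U * h x) / h x ^ 3) * m) s x :=
    (hasDerivAt_const_div_two_mul_sq_add_const_div CQ (6 * η * U) (hne x hx)).comp_hasDerivWithinAt
      x deriv_height
  exact (deriv_bracket.const_mul (-(1 / m))).congr_deriv (by rw [deriv_eq]; field_simp)

end ConvexDomain

/-- On a linear height component with nonzero slope, every solution of the first
integral `h³·p' = C_Q + 6·η·U·h` of the Reynolds equation has the closed form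
`p = −(1/m)·(C_Q/(2h²) + 6ηU/h) + C_P` for some constant `C_P`. -/
theorem reynolds_pwl_solution_unique
    (η U CQ hk m xk xk1 : ℝ) (hη : 0 < η) (hm : m ≠ 0)
    (h : ℝ → ℝ) (hdef : ∀ x, h x = hk + m * (x - xk))
    (hhpos : ∀ x ∈ Set.Icc xk xk1, 0 < h x)
    (p : ℝ → ℝ)
    (hpd : ∀ x ∈ Set.Icc xk xk1, DifferentiableAt ℝ p x)
    (hrel : ∀ x ∈ Set.Icc xk xk1,
      (h x) ^ 3 * deriv p x = CQ + 6 * η * U * h x) :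
    ∃ CP : ℝ, ∀ x ∈ Set.Icc xk xk1,
      p x = -(1 / m) * (CQ / (2 * (h x) ^ 2) + 6 * η * U / h x) + CP :=
  reynolds_pwl_solution_unique_general (convex_Icc xk xk1) hm (fun x _ => hdef x)
    (fun x hx => (hhpos x hx).ne') (fun x hx => (hpd x hx).hasDerivAt.hasDerivWithinAt) hrel
end

section
/- Let n ≥ 2 and let K be the n × n real symmetric tridiagonal matrix with diagonal entries K_{i,i} = α_i for 0 ≤ i ≤ n−1 and off-diagonal entries K_{i,i+1} = K_{i+1,i} = β_i for 0 ≤ i ≤ n−2, all other entries zero. Define recursively S_{n−2} = −β_{n−2}/α_{n−1} and S_k = −β_k/(α_{k+1} + S_{k+1}·β_{k+1}) for 0 ≤ k ≤ n−3; define G_{0,0} = 1/(α_0 + β_0·S_0), G_{i+1,i+1} = (1 − β_i·G_{i,i}·S_i)/(α_{i+1} + β_{i+1}·S_{i+1}) for 0 ≤ i ≤ n−3, and G_{n−1,n−1} = (1 − β_{n−2}·G_{n−2,n−2}·S_{n−2})/α_{n−1}; and for i < j set G_{i,j} = G_{i,i}·∏_{k=i}^{j−1} S_k, with G_{j,i}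 = G_{i,j}. Assume every denominator appearing in these recursions is nonzero. Then K is invertible and G = K⁻¹, i.e. K·G is the identity matrix. -/
open Matrix Finset

/-!
With the pivots `D k = α k + β k * S k`, where the last one is `D (n - 1) = α (n - 1)`, the
recursions read `S k * D (k + 1) = -β k` and `d (k + 1) * D (k + 1) + β k * d k * S k = 1`.
On and below the diagonal `G (i + 1) j = G i j * S i`, so the diagonal and superdiagonal terms of
`(K * G) i j` collapse to `D i * G i j`. Below the diagonal the subdiagonal term cancels this; on
the diagonal the two add up to `1`. Above the diagonal the recursion for `d` turns the subdiagonal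
term into `(1 - D i * d i) * ∏ S`, and the recursions for `S i` and `d (i + 1)` then make the sum
vanish.
-/

section CommSemiring

variable {R : Type*} [CommSemiring R]

/-- The symmetric tridiagonal matrix with diagonal `α` and off-diagonal `β`; only `α k` for `k < n`
and `β k` for `k + 1 < n` matter. -/
def symmTridiagonal (n : ℕ) (α β : ℕ → R) : Matrix (Fin n) (Fin n) R :=
  of fun i j ↦
    if (i : ℕ) = j then α i
    else if (i : ℕ) + 1 = j then β i
    else if (j : ℕ) + 1 = i then β j
    else 0

/-- The pivots of the elimination of a symmetric tridiagonal matrix from its last row upwards: the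
denominators in the recursions for `S` and `d`. The cutoff makes `α (n - 1)` the last pivot. -/
def schurPivot (n : ℕ) (α β S : ℕ → R) (k : ℕ) : R :=
  α k + if k + 1 < n then β k * S k else 0

/-- The symmetric kernel with diagonal `d` whose entries are propagated away from the diagonal by
the ratios `S`: the candidate for the entries of the inverse. -/
def greenKernel (d S : ℕ → R) (i j : ℕ) : R :=
  d (min i j) * ∏ k ∈ Ico (min i j) (max i j), S k

/-- The restriction of `greenKernel d S` to indices below `n`: the paper's matrix `G`. -/
def greenMatrix (n : ℕ) (d S : ℕ → R) : Matrix (Fin n) (Fin n) R :=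
  of fun i j ↦ greenKernel d S i j

variable {n : ℕ} {α β S d : ℕ → R}

theorem symmTridiagonal_mulVec_apply (u : ℕ → R) (i : Fin n) :
    (symmTridiagonal n α β *ᵥ fun k ↦ u k) i =
      α i * u i + (if (i : ℕ) + 1 < n then β i * u (i + 1) else 0) +
        (if 0 < (i : ℕ) then β (i - 1) * u (i - 1) else 0) := by
  have entry_mul (k : ℕ) :
      (if (i : ℕ) = k then α i else if (i : ℕ) + 1 = k then β i
        else if k + 1 = i then β k else 0) * u k =
      (if (i : ℕ) = k then α i * u i else 0) +
        (if (i : ℕ) + 1 = k then β i * u (i + 1) else 0) +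
        (if (i : ℕ) - 1 = k then (if 0 < (i : ℕ) then β (i - 1) * u (i - 1) else 0) else 0) := by
    split_ifs <;> first | omega | simp_all
  have sum_single (m : ℕ) (c : R) :
      (∑ k : Fin n, if m = (k : ℕ) then c else 0) = if m < n then c else 0 := by
    rw [Fin.sum_univ_eq_sum_range (fun k ↦ if m = k then c else 0), sum_ite_eq]
    simp only [mem_range]
  have pred_lt : (i : ℕ) - 1 < n := by omega
  simp only [mulVec, dotProduct, symmTridiagonal, of_apply, entry_mul, sum_add_distrib,
    sum_single, i.isLt, pred_lt, if_true]

theorem schurPivot_of_lt {k : ℕ} (hk : k + 1 < n) : schurPivot n α β S k = α k + β k * S k := by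
  rw [schurPivot, if_pos hk]

theorem schurPivot_last (m : ℕ) : schurPivot (m + 1) α β S m = α m := by
  simp [schurPivot]

theorem greenKernel_of_le {i j : ℕ} (hij : i ≤ j) :
    greenKernel d S i j = d i * ∏ k ∈ Ico i j, S k := by
  rw [greenKernel, min_eq_left hij, max_eq_right hij]

theorem greenKernel_comm (i j : ℕ) : greenKernel d S i j = greenKernel d S j i := by
  rw [greenKernel, greenKernel, min_comm, max_comm]

theorem greenKernel_succ_left {i j : ℕ} (hji : j ≤ i) :
    greenKernel d S (i + 1) j = greenKernel d S i j * S i := by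
  rw [greenKernel_comm, greenKernel_of_le (Nat.le_succ_of_le hji), prod_Ico_succ_top hji,
    greenKernel_comm i j, greenKernel_of_le hji, mul_assoc]

theorem eq_greenMatrix {G : Matrix (Fin n) (Fin n) R}
    (hG : ∀ i j : Fin n, G i j =
      if (i : ℕ) = j then d i
      else if (i : ℕ) < j then d i * ∏ k ∈ Ico (i : ℕ) j, S k
      else d j * ∏ k ∈ Ico (j : ℕ) i, S k) :
    G = greenMatrix n d S := by
  ext i j
  rw [hG, greenMatrix, of_apply]
  split_ifs with heq hlt
  · simp [greenKernel, heq]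
  · rw [greenKernel_of_le hlt.le]
  · rw [greenKernel_comm, greenKernel_of_le (not_lt.mp hlt)]

theorem symmTridiagonal_mulVec_greenKernel_of_ge {i : Fin n} {j : ℕ} (hji : j ≤ i) :
    (symmTridiagonal n α β *ᵥ fun k ↦ greenKernel d S k j) i =
      greenKernel d S i j * schurPivot n α β S i +
        if 0 < (i : ℕ) then β (i - 1) * greenKernel d S (i - 1) j else 0 := by
  rw [symmTridiagonal_mulVec_apply (fun k ↦ greenKernel d S k j), greenKernel_succ_left hji,
    schurPivot]
  split_ifs <;> ring

end CommSemiring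

section CommRing

variable {R : Type*} [CommRing R] {n : ℕ} {α β S d : ℕ → R}

theorem symmTridiagonal_mulVec_greenKernel_of_gt
    (hS : ∀ k, k + 1 < n → S k * schurPivot n α β S (k + 1) = -β k)
    {i : Fin n} {j : ℕ} (hji : j < i) :
    (symmTridiagonal n α β *ᵥ fun k ↦ greenKernel d S k j) i = 0 := by
  rw [symmTridiagonal_mulVec_greenKernel_of_ge hji.le, if_pos (Nat.zero_lt_of_lt hji)]
  obtain ⟨m, hm⟩ := Nat.exists_eq_add_one_of_ne_zero (Nat.ne_zero_of_lt hji)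
  rw [hm, Nat.add_sub_cancel, greenKernel_succ_left (by omega)]
  linear_combination greenKernel d S m j * hS m (by omega)

theorem greenKernel_mul_schurPivot_add
    (hd_zero : d 0 * schurPivot n α β S 0 = 1)
    (hd_succ : ∀ k, k + 1 < n → d (k + 1) * schurPivot n α β S (k + 1) = 1 - β k * d k * S k)
    {i j : ℕ} (hi : i < n) (hij : i ≤ j) :
    greenKernel d S i j * schurPivot n α β S i +
        (if 0 < i then β (i - 1) * greenKernel d S (i - 1) j else 0) =
      ∏ k ∈ Ico i j, S k := by
  rw [greenKernel_of_le hij]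
  cases i with
  | zero =>
    rw [if_neg (lt_irrefl 0)]
    linear_combination (∏ k ∈ Ico 0 j, S k) * hd_zero
  | succ m =>
    rw [if_pos m.succ_pos, Nat.add_sub_cancel, greenKernel_of_le (by omega),
      prod_eq_prod_Ico_succ_bot hij]
    linear_combination (∏ k ∈ Ico (m + 1) j, S k) * hd_succ m hi

theorem symmTridiagonal_mulVec_greenKernel_of_lt
    (hS : ∀ k, k + 1 < n → S k * schurPivot n α β S (k + 1) = -β k)
    (hd_zero : d 0 * schurPivot n α β S 0 = 1)
    (hd_succ : ∀ k, k + 1 < n → d (k + 1) * schurPivot n α β S (k + 1) = 1 - β k * d k * S k)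
    {i j : Fin n} (hij : i < j) :
    (symmTridiagonal n α β *ᵥ fun k ↦ greenKernel d S k j) i = 0 := by
  have hi : (i : ℕ) + 1 < n := by omega
  have lower_term := greenKernel_mul_schurPivot_add hd_zero hd_succ i.isLt (Fin.le_def.mp hij.le)
  rw [greenKernel_of_le (Fin.le_def.mp hij.le), schurPivot_of_lt hi,
    prod_eq_prod_Ico_succ_bot hij] at lower_term
  rw [symmTridiagonal_mulVec_apply (fun k ↦ greenKernel d S k j), if_pos hi,
    greenKernel_of_le (Fin.le_def.mp hij.le), greenKernel_of_le (Nat.succ_le_of_lt hij),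
    prod_eq_prod_Ico_succ_bot hij]
  linear_combination lower_term + (∏ k ∈ Ico ((i : ℕ) + 1) j, S k) *
    (d (i + 1) * hS i hi - S i * hd_succ i hi)

theorem symmTridiagonal_mul_greenMatrix
    (hS : ∀ k, k + 1 < n → S k * schurPivot n α β S (k + 1) = -β k)
    (hd_zero : d 0 * schurPivot n α β S 0 = 1)
    (hd_succ : ∀ k, k + 1 < n → d (k + 1) * schurPivot n α β S (k + 1) = 1 - β k * d k * S k) :
    symmTridiagonal n α β * greenMatrix n d S = 1 := by
  ext i j
  change (symmTridiagonal n α β *ᵥ fun k ↦ greenKernel d S k j) i = _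
  rcases lt_trichotomy i j with hij | rfl | hji
  · rw [symmTridiagonal_mulVec_greenKernel_of_lt hS hd_zero hd_succ hij, one_apply_ne hij.ne]
  · rw [symmTridiagonal_mulVec_greenKernel_of_ge le_rfl,
      greenKernel_mul_schurPivot_add hd_zero hd_succ i.isLt le_rfl, Ico_self, prod_empty,
      one_apply_eq]
  · rw [symmTridiagonal_mulVec_greenKernel_of_gt hS hji, one_apply_ne hji.ne']

end CommRing

theorem tridiagonal_schur_inverse_general {F : Type*} [Field F] {n : ℕ} (hn : 2 ≤ n)
    {α β S d : ℕ → F}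
    (hS_base : S (n - 2) = -β (n - 2) / α (n - 1))
    (hS_rec : ∀ k, k + 3 ≤ n → S k = -β k / (α (k + 1) + S (k + 1) * β (k + 1)))
    (hd0 : d 0 = 1 / (α 0 + β 0 * S 0))
    (hd_rec : ∀ i, i + 3 ≤ n →
      d (i + 1) = (1 - β i * d i * S i) / (α (i + 1) + β (i + 1) * S (i + 1)))
    (hd_last : d (n - 1) = (1 - β (n - 2) * d (n - 2) * S (n - 2)) / α (n - 1))
    (hden_last : α (n - 1) ≠ 0)
    (hden_rec : ∀ k, k + 3 ≤ n → α (k + 1) + S (k + 1) * β (k + 1) ≠ 0)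
    (hden0 : α 0 + β 0 * S 0 ≠ 0) :
    IsUnit (symmTridiagonal n α β) ∧ greenMatrix n d S = (symmTridiagonal n α β)⁻¹ := by
  have recursion (k : ℕ) (hk : k + 1 < n) :
      S k * schurPivot n α β S (k + 1) = -β k ∧
        d (k + 1) * schurPivot n α β S (k + 1) = 1 - β k * d k * S k := by
    obtain hk_inner | rfl : k + 3 ≤ n ∨ n = k + 2 := by omega
    · have pivot_ne_zero := hden_rec k hk_inner
      have hS := hS_rec k hk_inner
      rw [mul_comm (S (k + 1))] at pivot_ne_zero hS
      rw [schurPivot_of_lt hk_inner]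
      exact ⟨(eq_div_iff pivot_ne_zero).mp hS, (eq_div_iff pivot_ne_zero).mp (hd_rec k hk_inner)⟩
    · rw [schurPivot_last]
      exact ⟨(eq_div_iff hden_last).mp hS_base, (eq_div_iff hden_last).mp hd_last⟩
  have hd_zero : d 0 * schurPivot n α β S 0 = 1 := by
    rw [schurPivot_of_lt hn]
    exact (eq_div_iff hden0).mp hd0
  have mul_eq_one : symmTridiagonal n α β * greenMatrix n d S = 1 :=
    symmTridiagonal_mul_greenMatrix (fun k hk ↦ (recursion k hk).1) hd_zero
      fun k hk ↦ (recursion k hk).2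
  exact ⟨.of_mul_eq_one _ mul_eq_one, (inv_eq_right_inv mul_eq_one).symm⟩

/-- Recursive inversion of a symmetric tridiagonal matrix: with the sequences
`S` and diagonal entries `d` defined by the stated recursions (all denominators
nonzero), the symmetric matrix `G` with `G i j = d (min i j) · ∏ S_k` is the
inverse of the symmetric tridiagonal matrix `K` with diagonal `α` and
off-diagonal `β`. -/
theorem tridiagonal_schur_inverse
    (n : ℕ) (hn : 2 ≤ n) (α β : ℕ → ℝ)
    (K G : Matrix (Fin n) (Fin n) ℝ)
    (hK : ∀ i j : Fin n, K i j =
      if (i : ℕ) = j then α i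
      else if (i : ℕ) + 1 = j then β i
      else if (j : ℕ) + 1 = i then β j
      else 0)
    (S : ℕ → ℝ)
    (hS_base : S (n - 2) = -β (n - 2) / α (n - 1))
    (hS_rec : ∀ k, k + 3 ≤ n →
      S k = -β k / (α (k + 1) + S (k + 1) * β (k + 1)))
    (d : ℕ → ℝ)
    (hd0 : d 0 = 1 / (α 0 + β 0 * S 0))
    (hd_rec : ∀ i, i + 3 ≤ n →
      d (i + 1) = (1 - β i * d i * S i) / (α (i + 1) + β (i + 1) * S (i + 1)))
    (hd_last : d (n - 1) = (1 - β (n - 2) * d (n - 2) * S (n - 2)) / α (n - 1))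
    (hG : ∀ i j : Fin n, G i j =
      if (i : ℕ) = j then d i
      else if (i : ℕ) < j then d i * ∏ k ∈ Finset.Ico (i : ℕ) (j : ℕ), S k
      else d j * ∏ k ∈ Finset.Ico (j : ℕ) (i : ℕ), S k)
    (hden_last : α (n - 1) ≠ 0)
    (hden_rec : ∀ k, k + 3 ≤ n → α (k + 1) + S (k + 1) * β (k + 1) ≠ 0)
    (hden0 : α 0 + β 0 * S 0 ≠ 0) :
    IsUnit K ∧ G = K⁻¹ := by
  rw [(Matrix.ext hK : K = symmTridiagonal n α β), eq_greenMatrix hG]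
  exact tridiagonal_schur_inverse_general hn hS_base hS_rec hd0 hd_rec hd_last hden_last hden_rec
    hden0
end
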